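/- Periodic minimum problem, large domains: let τ ∈ [0,1], σ ∈ (0,1) and L ≥ max{τ, 1−τ}. Then min{2, 4√(σL), 4√((1−σ)L)} is the least element of the set of values E^{#}_τ(v) as v ranges over Adm(L,σ): every v ∈ Adm(L,σ) satisfies E^{#}_τ(v) ≥ min{2, 4√(σL), 4√((1−σ)L)}, and some v ∈ Adm(L,σ) attains this value. In particular, for L ≥ 1 this minimum value is independent of τ. -/

import Mathlib

open MeasureTheory Filter Set

noncomputable section

/-- `Adm L σ v` : `v` is admissible, i.e. `0 ≤ v ≤ 1` on `(0,L)`, `v` has finite pointwise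
total variation on `(0,L)` and `∫_{(0,L)} v = σL`. -/
def Adm (L σ : ℝ) (v : ℝ → ℝ) : Prop :=
  (∀ x ∈ Set.Ioo 0 L, 0 ≤ v x ∧ v x ≤ 1) ∧
  BoundedVariationOn v (Set.Ioo 0 L) ∧
  (∫ x in Set.Ioo 0 L, v x) = σ * L

/-- The interior part of the limit functional:
`2·λ({x ∈ (0,L) : 0 < v(x) < 1}) + Var(v;(0,L))`. -/
def Fvol (L : ℝ) (v : ℝ → ℝ) : ℝ :=
  2 * (volume {x ∈ Set.Ioo 0 L | 0 < v x ∧ v x < 1}).toReal +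
    (eVariationOn v (Set.Ioo 0 L)).toReal

/-- The boundary term `φ_τ(x,y) = λ( [0,1] ∩ ( ([−τ,x−τ] ∪ [1−τ,x+1−τ]) Δ [0,y] ) )`. -/
def phi (τ x y : ℝ) : ℝ :=
  (volume (Set.Icc (0 : ℝ) 1 ∩
    symmDiff (Set.Icc (-τ) (x - τ) ∪ Set.Icc (1 - τ) (x + 1 - τ)) (Set.Icc 0 y))).toReal

/-- Variation of an antitone function on a compact interval. -/
lemma aux_anti_var {f : ℝ → ℝ} {a b : ℝ} (hab : a ≤ b) (hf : AntitoneOn f (Set.Icc a b)) :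
    eVariationOn f (Set.Icc a b) ≤ ENNReal.ofReal (f a - f b) := by
  have h1 : MonotoneOn (fun x => - f x) (Set.Icc a b) := fun x hx y hy h => neg_le_neg (hf hx hy h)
  have h2 := h1.eVariationOn_eq (left_mem_Icc.2 hab) (right_mem_Icc.2 hab)
  rw [inter_self] at h2
  have h3 : eVariationOn (fun x => - f x) (Set.Icc a b) = eVariationOn f (Set.Icc a b) := by
    simp [eVariationOn]
  rw [h3] at h2
  rw [h2]
  apply ENNReal.ofReal_le_ofReal
  linarith

lemma aux_mono_var {f : ℝ → ℝ} {a b : ℝ} (hab : a ≤ b) (hf : MonotoneOn f (Set.Icc a b)) :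
    eVariationOn f (Set.Icc a b) ≤ ENNReal.ofReal (f b - f a) := by
  have h2 := hf.eVariationOn_eq (left_mem_Icc.2 hab) (right_mem_Icc.2 hab)
  rw [inter_self] at h2
  exact h2.le

/-- Variation of a two-valued bump. -/
lemma aux_bump_var {L α β c0 c1 : ℝ} (h0 : 0 < α) (h1 : α ≤ β) (h2 : β < L) :
    eVariationOn (fun x => if α ≤ x ∧ x ≤ β then c1 else c0) (Set.Ioo 0 L) ≤
      ENNReal.ofReal (2 * |c1 - c0|) := by
  set f : ℝ → ℝ := fun x => if α ≤ x ∧ x ≤ β then c1 else c0 with hf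
  have hs : Set.Ioo 0 L ⊆ Set.Icc 0 β ∪ Set.Icc β L := by
    intro x hx
    rcases le_total x β with h | h
    · exact Or.inl ⟨hx.1.le, h⟩
    · exact Or.inr ⟨h, hx.2.le⟩
  refine (eVariationOn.mono f hs).trans ?_
  rw [eVariationOn.union f (isGreatest_Icc (h0.le.trans h1)) (isLeast_Icc h2.le)]
  have f0 : f 0 = c0 := by
    simp only [hf]; rw [if_neg]; rintro ⟨h, -⟩; linarith
  have fb : f β = c1 := by
    simp only [hf]; rw [if_pos ⟨h1, le_rfl⟩]
  have fL : f L = c0 := by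
    simp only [hf]; rw [if_neg]; rintro ⟨-, h⟩; linarith
  rw [two_mul, ENNReal.ofReal_add (abs_nonneg _) (abs_nonneg _)]
  rcases le_total c0 c1 with hc | hc
  · gcongr
    · refine (aux_mono_var (h0.le.trans h1) ?_).trans ?_
      · intro x hx y hy hxy
        simp only [hf]
        split_ifs with h h' h'
        · exact le_rfl
        · exact absurd ⟨h.1.trans hxy, hy.2⟩ h'
        · exact hc
        · exact le_rfl
      · rw [fb, f0]; exact ENNReal.ofReal_le_ofReal (le_abs_self _)
    · refine (aux_anti_var h2.le ?_).trans ?_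
      · intro x hx y hy hxy
        simp only [hf]
        split_ifs with h h' h'
        · exact le_rfl
        · exact absurd ⟨h1.trans hx.1, hxy.trans h.2⟩ h'
        · exact hc
        · exact le_rfl
      · rw [fb, fL]; exact ENNReal.ofReal_le_ofReal (le_abs_self _)
  · gcongr
    · refine (aux_anti_var (h0.le.trans h1) ?_).trans ?_
      · intro x hx y hy hxy
        simp only [hf]
        split_ifs with h h' h'
        · exact le_rfl
        · exact hc
        · exact absurd ⟨h'.1.trans hxy, hy.2⟩ h
        · exact le_rfl
      · rw [fb, f0, abs_sub_comm]; exact ENNReal.ofReal_le_ofReal (le_abs_self _)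
    · refine (aux_mono_var h2.le ?_).trans ?_
      · intro x hx y hy hxy
        simp only [hf]
        split_ifs with h h' h'
        · exact le_rfl
        · exact hc
        · exact absurd ⟨h1.trans hx.1, hxy.trans h'.2⟩ h
        · exact le_rfl
      · rw [fb, fL, abs_sub_comm]; exact ENNReal.ofReal_le_ofReal (le_abs_self _)

/-- Bump competitors. -/
lemma aux_bump {L σ c0 c1 l : ℝ} (hc0 : c0 = 0 ∨ c0 = 1)
    (hc1 : 0 ≤ c1 ∧ c1 ≤ 1) (hl : 0 < l) (hlL : l < L)
    (hint : c0 * L + (c1 - c0) * l = σ * L) :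
    ∃ v : ℝ → ℝ, Adm L σ v ∧
      Tendsto v (nhdsWithin 0 (Set.Ioo 0 L)) (nhds c0) ∧
      Tendsto v (nhdsWithin L (Set.Ioo 0 L)) (nhds c0) ∧
      Fvol L v ≤ 2 * l + 2 * |c1 - c0| ∧
      ((c1 = 0 ∨ c1 = 1) → Fvol L v ≤ 2 * |c1 - c0|) := by
  obtain ⟨α, hα⟩ : ∃ α, α = (L - l) / 2 := ⟨_, rfl⟩
  obtain ⟨β, hβ⟩ : ∃ β, β = (L + l) / 2 := ⟨_, rfl⟩
  have h0 : 0 < α := by linarith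
  have h1 : α ≤ β := by linarith
  have h2 : β < L := by linarith
  have hvar := aux_bump_var (c0 := c0) (c1 := c1) h0 h1 h2
  set f : ℝ → ℝ := fun x => if α ≤ x ∧ x ≤ β then c1 else c0 with hf
  have hvarR : (eVariationOn f (Set.Ioo 0 L)).toReal ≤ 2 * |c1 - c0| :=
    ENNReal.toReal_le_of_le_ofReal (by positivity) hvar
  have hfe : f = fun x => c0 + (Set.Icc α β).indicator (fun _ => c1 - c0) x := by
    funext x
    simp only [hf, Set.indicator, Set.mem_Icc]
    split_ifs <;> ring
  refine ⟨f, ⟨?_, ?_, ?_⟩, ?_, ?_, ?_, ?_⟩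
  · intro x _
    simp only [hf]
    split_ifs
    · exact hc1
    · rcases hc0 with h | h <;> rw [h] <;> norm_num
  · exact ne_top_of_le_ne_top ENNReal.ofReal_ne_top hvar
  · rw [hfe, integral_add, setIntegral_indicator measurableSet_Icc]
    · have : Set.Ioo 0 L ∩ Set.Icc α β = Set.Icc α β :=
        inter_eq_right.2 (fun x hx => ⟨h0.trans_le hx.1, hx.2.trans_lt h2⟩)
      rw [this]
      simp only [setIntegral_const, smul_eq_mul]
      rw [Real.volume_real_Ioo_of_le (by linarith), Real.volume_real_Icc_of_le h1, ← hint, hα, hβ]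
      ring
    · simp
    · exact (integrable_indicator_iff measurableSet_Icc).2 (by
        refine integrableOn_const ?_
        refine ne_top_of_le_ne_top ?_ (Measure.restrict_apply_le _ _)
        simp)
  · refine tendsto_const_nhds.congr' ?_
    filter_upwards [mem_nhdsWithin_of_mem_nhds (Iio_mem_nhds h0)] with x hx
    simp only [hf]; rw [if_neg]; rintro ⟨h, -⟩; exact absurd hx (not_lt.2 h)
  · refine tendsto_const_nhds.congr' ?_
    filter_upwards [mem_nhdsWithin_of_mem_nhds (Ioi_mem_nhds h2)] with x hx
    simp only [hf]; rw [if_neg]; rintro ⟨-, h⟩; exact absurd hx (not_lt.2 h)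
  · have hm : (volume {x ∈ Set.Ioo 0 L | 0 < f x ∧ f x < 1}).toReal ≤ l := by
      apply ENNReal.toReal_le_of_le_ofReal hl.le
      have : {x ∈ Set.Ioo 0 L | 0 < f x ∧ f x < 1} ⊆ Set.Icc α β := by
        rintro x ⟨-, hx⟩
        by_contra hn
        have : f x = c0 := by
          simp only [hf]; rw [if_neg]; exact hn
        rw [this] at hx
        rcases hc0 with h | h <;> rw [h] at hx <;> norm_num at hx
      refine (measure_mono this).trans ?_
      rw [Real.volume_Icc]
      apply ENNReal.ofReal_le_ofReal
      linarith
    unfold Fvol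
    linarith
  · intro hc
    have : {x ∈ Set.Ioo 0 L | 0 < f x ∧ f x < 1} = ∅ := by
      apply Set.eq_empty_of_forall_notMem
      rintro x ⟨-, hx⟩
      simp only [hf] at hx
      split_ifs at hx
      · rcases hc with h | h <;> rw [h] at hx <;> norm_num at hx
      · rcases hc0 with h | h <;> rw [h] at hx <;> norm_num at hx
    unfold Fvol
    rw [this]
    simpa using hvarR

lemma aux_phi_zero (τ : ℝ) : phi τ 0 0 = 0 := by
  unfold phi
  have : volume (Set.Icc (0 : ℝ) 1 ∩
    symmDiff (Set.Icc (-τ) (0 - τ) ∪ Set.Icc (1 - τ) (0 + 1 - τ)) (Set.Icc 0 0)) = 0 := by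
    refine measure_mono_null (t := {-τ, 1 - τ, 0}) ?_ ((Set.toFinite _).measure_zero _)
    rintro x ⟨-, hx⟩
    simp only [Set.mem_insert_iff, Set.mem_singleton_iff]
    rcases hx with ⟨h | h, -⟩ | ⟨h, -⟩
    · left; linarith [h.1, h.2]
    · right; left; linarith [h.1, h.2]
    · right; right; linarith [h.1, h.2]
  rw [this]; rfl

lemma aux_phi_one {τ : ℝ} (hτ : τ ∈ Set.Icc (0 : ℝ) 1) : phi τ 1 1 = 0 := by
  unfold phi
  have : (Set.Icc (0 : ℝ) 1 ∩
    symmDiff (Set.Icc (-τ) (1 - τ) ∪ Set.Icc (1 - τ) (1 + 1 - τ)) (Set.Icc 0 1)) = ∅ := by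
    apply Set.eq_empty_of_forall_notMem
    rintro x ⟨hx0, ⟨-, h⟩ | ⟨-, h⟩⟩
    · exact h hx0
    · apply h
      rcases le_total x (1 - τ) with h' | h'
      · left; exact ⟨by linarith [hx0.1, hτ.1], h'⟩
      · right; exact ⟨h', by linarith [hx0.2, hτ.2]⟩
  rw [this]; simp

lemma aux_phi_ne_top (τ a b : ℝ) : volume (Set.Icc (0 : ℝ) 1 ∩
    symmDiff (Set.Icc (-τ) (a - τ) ∪ Set.Icc (1 - τ) (a + 1 - τ)) (Set.Icc 0 b)) ≠ ⊤ :=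
  ne_top_of_le_ne_top (b := volume (Set.Icc (0:ℝ) 1)) (by simp) (measure_mono inter_subset_left)

/-- Measure of two ordered open intervals inside a set of finite measure. -/
lemma aux_two_intervals {s : Set ℝ} (hs : volume s ≠ ⊤) {p q r t : ℝ} (hqr : q ≤ r)
    (h1 : Set.Ioo p q ⊆ s) (h2 : Set.Ioo r t ⊆ s) :
    (q - p) + (t - r) ≤ (volume s).toReal := by
  have hd : Disjoint (Set.Ioo p q) (Set.Ioo r t) := by
    rw [Set.disjoint_left]
    intro x hx hx'
    linarith [hx.2, hx'.1]
  have h3 : volume.real (Set.Ioo p q ∪ Set.Ioo r t) ≤ volume.real s :=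
    measureReal_mono (union_subset h1 h2) hs
  rw [measureReal_union hd measurableSet_Ioo (by simp) (by simp), Real.volume_real_Ioo,
    Real.volume_real_Ioo] at h3
  have := le_max_left (q - p) 0
  have := le_max_left (t - r) 0
  have h4 : volume.real s = (volume s).toReal := rfl
  linarith

lemma aux_phi_shift {τ a b : ℝ} (hτ : τ ∈ Set.Icc (0 : ℝ) 1) (ha : 0 ≤ a ∧ a ≤ 1)
    (hb : 0 ≤ b ∧ b ≤ 1) : 1 - |a - τ| - |b - (1 - τ)| ≤ phi τ a b := by
  have h := aux_two_intervals (aux_phi_ne_top τ a b) (p := max 0 (a - τ)) (q := min b (1 - τ))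
    (r := max b (1 - τ)) (t := min 1 (a + 1 - τ)) min_le_max ?_ ?_
  · refine le_trans ?_ h
    obtain ⟨h1, h2⟩ := hτ
    rcases le_total a τ with h3 | h3 <;> rcases le_total b (1 - τ) with h4 | h4
    · rw [max_eq_left (by linarith), min_eq_left h4, max_eq_right h4, min_eq_right (by linarith),
        abs_of_nonpos (by linarith), abs_of_nonpos (by linarith)]; linarith
    · rw [max_eq_left (by linarith), min_eq_right h4, max_eq_left h4, min_eq_right (by linarith),
        abs_of_nonpos (by linarith), abs_of_nonneg (by linarith)]; linarith
    · rw [max_eq_right (by linarith), min_eq_left h4, max_eq_right h4, min_eq_left (by linarith),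
        abs_of_nonneg (by linarith), abs_of_nonpos (by linarith)]; linarith
    · rw [max_eq_right (by linarith), min_eq_right h4, max_eq_left h4, min_eq_left (by linarith),
        abs_of_nonneg (by linarith), abs_of_nonneg (by linarith)]; linarith
  · rintro x ⟨hx1, hx2⟩
    rw [max_lt_iff] at hx1
    rw [lt_min_iff] at hx2
    refine ⟨⟨hx1.1.le, by linarith⟩, Or.inr ⟨⟨hx1.1.le, hx2.1.le⟩, ?_⟩⟩
    rintro (h | h)
    · linarith [h.2]
    · linarith [h.1]
  · rintro x ⟨hx1, hx2⟩
    rw [max_lt_iff] at hx1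
    rw [lt_min_iff] at hx2
    refine ⟨⟨by linarith, hx2.1.le⟩, Or.inl ⟨Or.inr ⟨hx1.2.le, hx2.2.le⟩, ?_⟩⟩
    rintro h
    linarith [h.2]

lemma aux_phi_abs {τ a b : ℝ} (hτ : τ ∈ Set.Icc (0 : ℝ) 1) (ha : 0 ≤ a ∧ a ≤ 1)
    (hb : 0 ≤ b ∧ b ≤ 1) : |a - b| ≤ phi τ a b := by
  have hfin := aux_phi_ne_top τ a b
  have hphi : phi τ a b = volume.real (Set.Icc (0 : ℝ) 1 ∩
    symmDiff (Set.Icc (-τ) (a - τ) ∪ Set.Icc (1 - τ) (a + 1 - τ)) (Set.Icc 0 b)) := rfl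
  set D := (Set.Icc (0 : ℝ) 1 ∩
    symmDiff (Set.Icc (-τ) (a - τ) ∪ Set.Icc (1 - τ) (a + 1 - τ)) (Set.Icc 0 b)) with hD
  obtain ⟨h1, h2⟩ := hτ
  rw [abs_sub_le_iff]
  constructor
  · -- the shifted arc is covered by `[0,b]` and the symmetric difference
    have hT : volume (D ∪ Set.Icc 0 b) ≠ ⊤ := by
      refine ne_top_of_le_ne_top ?_ (measure_union_le _ _)
      exact ENNReal.add_ne_top.2 ⟨hfin, by simp⟩
    have hsub : ∀ x, 0 ≤ x → x ≤ 1 →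
        x ∈ (Set.Icc (-τ) (a - τ) ∪ Set.Icc (1 - τ) (a + 1 - τ)) → x ∈ D ∪ Set.Icc 0 b := by
      intro x hx0 hx1 hx
      by_cases hxb : x ∈ Set.Icc 0 b
      · exact Or.inr hxb
      · exact Or.inl ⟨⟨hx0, hx1⟩, Or.inl ⟨hx, hxb⟩⟩
    have h3 : volume.real (D ∪ Set.Icc 0 b) ≤ volume.real D + b := by
      refine (measureReal_union_le _ _).trans ?_
      rw [Real.volume_real_Icc_of_le hb.1]; linarith
    have h4 : a ≤ volume.real (D ∪ Set.Icc 0 b) := by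
      rcases le_total a τ with h5 | h5
      · have := aux_two_intervals hT (p := 1 - τ) (q := a + 1 - τ) (r := a + 1 - τ)
          (t := a + 1 - τ) le_rfl ?_ (by simp)
        · have e : volume.real (D ∪ Set.Icc 0 b) = (volume (D ∪ Set.Icc 0 b)).toReal := rfl
          linarith
        · intro x hx
          exact hsub x (by linarith [hx.1]) (by linarith [hx.2]) (Or.inr ⟨hx.1.le, hx.2.le⟩)
      · have := aux_two_intervals hT (p := 0) (q := a - τ) (r := 1 - τ)
          (t := 1) (by linarith) ?_ ?_
        · have e : volume.real (D ∪ Set.Icc 0 b) = (volume (D ∪ Set.Icc 0 b)).toReal := rfl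
          linarith
        · intro x hx
          exact hsub x (by linarith [hx.1]) (by linarith [hx.2])
            (Or.inl ⟨by linarith [hx.1], hx.2.le⟩)
        · intro x hx
          exact hsub x (by linarith [hx.1]) (by linarith [hx.2])
            (Or.inr ⟨hx.1.le, by linarith [hx.2]⟩)
    linarith
  · have hsub : Set.Icc 0 b ⊆ D ∪ (Set.Icc 0 (max 0 (a - τ)) ∪
        Set.Icc (1 - τ) (min 1 (a + 1 - τ))) := by
      intro x hx
      by_cases hxS : x ∈ (Set.Icc (-τ) (a - τ) ∪ Set.Icc (1 - τ) (a + 1 - τ))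
      · right
        rcases hxS with h | h
        · exact Or.inl ⟨hx.1, h.2.trans (le_max_right _ _)⟩
        · exact Or.inr ⟨h.1, le_min (hx.2.trans hb.2) h.2⟩
      · exact Or.inl ⟨⟨hx.1, hx.2.trans hb.2⟩, Or.inr ⟨hx, hxS⟩⟩
    have h3 := measureReal_mono (μ := volume) hsub (by
      refine ne_top_of_le_ne_top ?_ (measure_union_le _ _)
      refine ENNReal.add_ne_top.2 ⟨hfin, ?_⟩
      refine ne_top_of_le_ne_top ?_ (measure_union_le _ _)
      exact ENNReal.add_ne_top.2 ⟨by simp, by simp⟩)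
    have h4 := measureReal_union_le (μ := volume) D (Set.Icc 0 (max 0 (a - τ)) ∪
        Set.Icc (1 - τ) (min 1 (a + 1 - τ)))
    have h5 := measureReal_union_le (μ := volume) (Set.Icc 0 (max 0 (a - τ)))
        (Set.Icc (1 - τ) (min 1 (a + 1 - τ)))
    rw [Real.volume_real_Icc_of_le (le_max_left _ _), Real.volume_real_Icc_of_le
      (le_min (by linarith) (by linarith))] at h5
    rw [Real.volume_real_Icc_of_le hb.1] at h3
    have h6 : max 0 (a - τ) - 0 + (min 1 (a + 1 - τ) - (1 - τ)) = a := by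
      rcases le_total a τ with h | h
      · rw [max_eq_left (by linarith), min_eq_right (by linarith)]; ring
      · rw [max_eq_right (by linarith), min_eq_left (by linarith)]; ring
    linarith

/-- Variation dominates a four-point sum. -/
lemma aux_var_four {L : ℝ} {v : ℝ → ℝ} (hv : BoundedVariationOn v (Set.Ioo 0 L)) {s x y t : ℝ}
    (hs : 0 < s) (hsx : s ≤ x) (hxy : x ≤ y) (hyt : y ≤ t) (ht : t < L) :
    |v s - v x| + |v x - v y| + |v y - v t| ≤ (eVariationOn v (Set.Ioo 0 L)).toReal := by
  have h1 : eVariationOn v (Set.Icc s x) + eVariationOn v (Set.Icc x y) +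
      eVariationOn v (Set.Icc y t) ≤ eVariationOn v (Set.Ioo 0 L) := by
    rw [← eVariationOn.union v (isGreatest_Icc hsx) (isLeast_Icc hxy),
      Set.Icc_union_Icc_eq_Icc hsx hxy,
      ← eVariationOn.union v (isGreatest_Icc (hsx.trans hxy)) (isLeast_Icc hyt),
      Set.Icc_union_Icc_eq_Icc (hsx.trans hxy) hyt]
    exact eVariationOn.mono v (fun z hz => ⟨hs.trans_le hz.1, hz.2.trans_lt ht⟩)
  have h2 : edist (v s) (v x) + edist (v x) (v y) + edist (v y) (v t) ≤
      eVariationOn v (Set.Ioo 0 L) := by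
    refine le_trans ?_ h1
    gcongr
    · exact eVariationOn.edist_le v (left_mem_Icc.2 hsx) (right_mem_Icc.2 hsx)
    · exact eVariationOn.edist_le v (left_mem_Icc.2 hxy) (right_mem_Icc.2 hxy)
    · exact eVariationOn.edist_le v (left_mem_Icc.2 hyt) (right_mem_Icc.2 hyt)
  have h3 := ENNReal.toReal_mono hv h2
  rw [ENNReal.toReal_add (by finiteness) (by finiteness),
    ENNReal.toReal_add (by finiteness) (by finiteness)] at h3
  simpa [edist_dist, Real.dist_eq] using h3

lemma aux_var_limits {L : ℝ} {v : ℝ → ℝ} (hv : BoundedVariationOn v (Set.Ioo 0 L)) {a b : ℝ}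
    (ha : Tendsto v (nhdsWithin 0 (Set.Ioo 0 L)) (nhds a))
    (hb : Tendsto v (nhdsWithin L (Set.Ioo 0 L)) (nhds b)) {x y : ℝ}
    (hx : 0 < x) (hxy : x ≤ y) (hy : y < L) :
    |a - v x| + |v x - v y| + |v y - b| ≤ (eVariationOn v (Set.Ioo 0 L)).toReal := by
  have hL : 0 < L := by linarith
  have n0 : (nhdsWithin 0 (Set.Ioo 0 L)).NeBot := left_nhdsWithin_Ioo_neBot hL
  have n1 : (nhdsWithin L (Set.Ioo 0 L)).NeBot := right_nhdsWithin_Ioo_neBot hL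
  have step : ∀ t, y ≤ t → t < L →
      |a - v x| + |v x - v y| + |v y - v t| ≤ (eVariationOn v (Set.Ioo 0 L)).toReal := by
    intro t hyt ht
    refine le_of_tendsto (((ha.sub_const (v x)).abs.add_const _).add_const _) ?_
    filter_upwards [mem_nhdsWithin_of_mem_nhds (Iio_mem_nhds hx), self_mem_nhdsWithin] with s h1 h2
    exact aux_var_four hv h2.1 (le_of_lt h1) hxy hyt ht
  refine le_of_tendsto ((hb.const_sub (v y)).abs.const_add _) ?_
  filter_upwards [mem_nhdsWithin_of_mem_nhds (Ioi_mem_nhds hy), self_mem_nhdsWithin] with t h1 h2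
  exact step t (le_of_lt h1) h2.2

lemma aux_amgm {p q r : ℝ} (hp : 0 ≤ p) (hq : 0 ≤ q) (h : r ≤ p * q) :
    4 * Real.sqrt r ≤ 2 * p + 2 * q := by
  have : Real.sqrt r ≤ (p + q) / 2 := by
    apply Real.sqrt_le_iff.2 ⟨by linarith, by nlinarith [sq_nonneg (p - q)]⟩
  linarith

lemma aux_int_bound {L C : ℝ} {w : ℝ → ℝ} {D : Set ℝ} (hD : D ⊆ Set.Ioo 0 L)
    (h0 : ∀ x ∈ Set.Ioo 0 L \ D, w x = 0) (hC : ∀ x ∈ D, |w x| ≤ C) :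
    ∫ x in Set.Ioo 0 L, w x ≤ C * (volume D).toReal := by
  rw [setIntegral_eq_of_subset_of_forall_sdiff_eq_zero measurableSet_Ioo hD h0]
  refine (le_abs_self _).trans ?_
  exact norm_setIntegral_le_of_norm_le_const (f := w)
    ((measure_mono hD).trans_lt measure_Ioo_lt_top) hC

lemma aux_lower {τ σ L : ℝ} (hτ : τ ∈ Set.Icc (0 : ℝ) 1) (hσ : σ ∈ Set.Ioo (0 : ℝ) 1)
    (hL : max τ (1 - τ) ≤ L) (v : ℝ → ℝ) (a b : ℝ) (hv : Adm L σ v)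
    (ha : Tendsto v (nhdsWithin 0 (Set.Ioo 0 L)) (nhds a))
    (hb : Tendsto v (nhdsWithin L (Set.Ioo 0 L)) (nhds b)) :
    min (min 2 (4 * Real.sqrt (σ * L))) (4 * Real.sqrt ((1 - σ) * L)) ≤
          Fvol L v + phi τ a b := by
  obtain ⟨hv01, hbv, hint⟩ := hv
  have hL1 := (le_max_left _ _).trans hL
  have hL2 := (le_max_right _ _).trans hL
  have hL0 : 0 < L := by linarith
  have n0 : (nhdsWithin 0 (Set.Ioo 0 L)).NeBot := left_nhdsWithin_Ioo_neBot hL0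
  have n1 : (nhdsWithin L (Set.Ioo 0 L)).NeBot := right_nhdsWithin_Ioo_neBot hL0
  have ha01 : 0 ≤ a ∧ a ≤ 1 :=
    ⟨ge_of_tendsto ha (by filter_upwards [self_mem_nhdsWithin] with x hx using (hv01 x hx).1),
     le_of_tendsto ha (by filter_upwards [self_mem_nhdsWithin] with x hx using (hv01 x hx).2)⟩
  have hb01 : 0 ≤ b ∧ b ≤ 1 :=
    ⟨ge_of_tendsto hb (by filter_upwards [self_mem_nhdsWithin] with x hx using (hv01 x hx).1),
     le_of_tendsto hb (by filter_upwards [self_mem_nhdsWithin] with x hx using (hv01 x hx).2)⟩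
  have hI : IntegrableOn v (Set.Ioo 0 L) := by
    by_contra h
    rw [integral_undef h] at hint
    have := mul_pos hσ.1 hL0
    linarith
  have hphi1 := aux_phi_abs hτ ha01 hb01
  have hphi2 := aux_phi_shift hτ ha01 hb01
  have hlim := fun x y => aux_var_limits (x := x) (y := y) hbv ha hb
  unfold Fvol
  set V := (eVariationOn v (Set.Ioo 0 L)).toReal with hV
  set D := {x ∈ Set.Ioo 0 L | 0 < v x ∧ v x < 1} with hD
  have hDs : D ⊆ Set.Ioo 0 L := fun x hx => hx.1
  set p := (volume D).toReal with hp
  have hp0 : 0 ≤ p := ENNReal.toReal_nonneg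
  -- oscillation bound
  have hosc : ∀ x ∈ Set.Ioo 0 L, ∀ y ∈ Set.Ioo 0 L, 2 * (v x - v y) ≤ V + phi τ a b := by
    intro x hx y hy
    have e1 := abs_le.1 hphi1
    rcases le_total x y with h | h
    · have h1 := hlim x y hx.1 h hy.2
      have := neg_le_abs (a - v x); have := le_abs_self (v x - v y)
      have := neg_le_abs (v y - b); have := neg_le_abs (a - b)
      have := le_abs_self (a - b)
      linarith
    · have h1 := hlim y x hy.1 h hx.2
      have := le_abs_self (a - v y); have := neg_le_abs (v y - v x)
      have := le_abs_self (v x - b); have := neg_le_abs (a - b)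
      have := le_abs_self (a - b)
      linarith
  have hne : (v '' Set.Ioo 0 L).Nonempty := (nonempty_Ioo.2 hL0).image _
  have hbb : BddBelow (v '' Set.Ioo 0 L) := ⟨0, by rintro _ ⟨x, hx, rfl⟩; exact (hv01 x hx).1⟩
  have hba : BddAbove (v '' Set.Ioo 0 L) := ⟨1, by rintro _ ⟨x, hx, rfl⟩; exact (hv01 x hx).2⟩
  set M := sSup (v '' Set.Ioo 0 L) with hM
  set m := sInf (v '' Set.Ioo 0 L) with hm
  have hleM : ∀ x ∈ Set.Ioo 0 L, v x ≤ M := fun x hx => le_csSup hba ⟨x, hx, rfl⟩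
  have hmle : ∀ x ∈ Set.Ioo 0 L, m ≤ v x := fun x hx => csInf_le hbb ⟨x, hx, rfl⟩
  have hM1 : M ≤ 1 := csSup_le hne (by rintro _ ⟨x, hx, rfl⟩; exact (hv01 x hx).2)
  have hm0 : 0 ≤ m := le_csInf hne (by rintro _ ⟨x, hx, rfl⟩; exact (hv01 x hx).1)
  have hmM : m ≤ M := csInf_le_csSup hne hbb hba
  have hoscM : 2 * (M - m) ≤ V + phi τ a b := by
    have h1 : ∀ y ∈ Set.Ioo 0 L, M ≤ (V + phi τ a b) / 2 + v y := fun y hy =>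
      csSup_le hne (by rintro _ ⟨x, hx, rfl⟩; linarith [hosc x hx y hy])
    have h2 : M - (V + phi τ a b) / 2 ≤ m :=
      le_csInf hne (by rintro _ ⟨x, hx, rfl⟩; linarith [h1 x hx])
    linarith
  rcases hm0.eq_or_lt with hm0 | hm0
  · rcases hM1.eq_or_lt with hM1 | hM1
    · -- full oscillation
      refine ((min_le_left _ _).trans (min_le_left _ _)).trans ?_
      rw [hM1, ← hm0] at hoscM
      linarith
    · refine ((min_le_left _ _).trans (min_le_right _ _)).trans ?_
      have h1 := aux_int_bound (w := v) (C := M) hDs ?_ ?_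
      · rw [hint] at h1
        have := aux_amgm (p := p) (q := M) (r := σ * L) hp0 (by linarith) (by linarith)
        linarith
      · rintro x ⟨hx, hxD⟩
        by_contra hn
        exact hxD ⟨hx, lt_of_le_of_ne (hv01 x hx).1 (Ne.symm hn), (hleM x hx).trans_lt hM1⟩
      · intro x hx
        rw [abs_of_pos hx.2.1]; exact hleM x hx.1
  · rcases hM1.eq_or_lt with hM1 | hM1
    · refine (min_le_right _ _).trans ?_
      have h1 := aux_int_bound (w := fun x => 1 - v x) (C := 1 - m) hDs ?_ ?_
      · rw [integral_sub (by simp) hI, hint] at h1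
        simp only [setIntegral_const, smul_eq_mul] at h1
        rw [Real.volume_real_Ioo_of_le hL0.le] at h1
        have := aux_amgm (p := p) (q := 1 - m) (r := (1 - σ) * L) hp0 (by linarith) (by linarith)
        linarith
      · rintro x ⟨hx, hxD⟩
        by_contra hn
        refine hxD ⟨hx, hm0.trans_le (hmle x hx), lt_of_le_of_ne (hv01 x hx).2 ?_⟩
        intro h; apply hn; simp [h]
      · intro x hx
        rw [abs_of_pos (by linarith [hx.2.2])]; linarith [hmle x hx.1]
    · -- the diffuse phase fills the domain
      have hDe : D = Set.Ioo 0 L := by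
        apply Subset.antisymm hDs
        intro x hx
        exact ⟨hx, hm0.trans_le (hmle x hx), (hleM x hx).trans_lt hM1⟩
      have hpL : p = L := by
        rw [hp, hDe, Real.volume_Ioo, sub_zero, ENNReal.toReal_ofReal hL0.le]
      have hvol : volume (Set.Ioo 0 L) ≠ 0 := by simp [hL0]
      have havg : (⨍ x in Set.Ioo 0 L, v x) = σ := by
        rw [setAverage_eq, hint, Real.volume_real_Ioo_of_le hL0.le, smul_eq_mul, sub_zero]
        field_simp
      obtain ⟨x, hx, hxσ⟩ := exists_le_setAverage hvol (by simp) hI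
      obtain ⟨y, hy, hyσ⟩ := exists_setAverage_le hvol (by simp) hI
      rw [havg] at hxσ hyσ
      have hVσ : |a - σ| + |b - σ| ≤ V := by
        have ga := abs_sub_le a (v x) σ
        have ga' := abs_sub_le a (v y) σ
        have gb := abs_sub_le b (v x) σ
        have gb' := abs_sub_le b (v y) σ
        have ex : |v x - σ| = σ - v x := by rw [abs_of_nonpos (by linarith)]; ring
        have ey : |v y - σ| = v y - σ := abs_of_nonneg (by linarith)
        rcases le_total x y with h | h
        · have h1 := hlim x y hx.1 h hy.2
          rw [abs_sub_comm (v y) b] at h1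
          have := neg_le_abs (v x - v y)
          linarith
        · have h1 := hlim y x hy.1 h hx.2
          rw [abs_sub_comm (v x) b] at h1
          have := le_abs_self (v y - v x)
          linarith
      -- transfer the shifted bound from `a, b` to `σ`
      have t1 := abs_sub_le σ a τ
      have t1' := abs_sub_le a σ τ
      have t2' := abs_sub_le b σ (1 - τ)
      have hE : 1 - |σ - τ| - |σ - (1 - τ)| ≤ V + phi τ a b := by linarith
      rw [hpL]
      have hs0 := aux_amgm (p := L) (q := σ) (r := σ * L) hL0.le hσ.1.le (by linarith)
      have hs1 := aux_amgm (p := L) (q := 1 - σ) (r := (1 - σ) * L) hL0.le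
        (by linarith [hσ.2]) (by linarith)
      rcases le_total σ τ with h3 | h3 <;> rcases le_total σ (1 - τ) with h4 | h4
      · refine ((min_le_left _ _).trans (min_le_right _ _)).trans ?_
        rw [abs_of_nonpos (by linarith), abs_of_nonpos (by linarith)] at hE
        linarith
      · refine ((min_le_left _ _).trans (min_le_left _ _)).trans ?_
        rw [abs_of_nonpos (by linarith), abs_of_nonneg (by linarith)] at hE
        linarith
      · refine ((min_le_left _ _).trans (min_le_left _ _)).trans ?_
        rw [abs_of_nonneg (by linarith), abs_of_nonpos (by linarith)] at hE
        linarith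
      · refine (min_le_right _ _).trans ?_
        rw [abs_of_nonneg (by linarith), abs_of_nonneg (by linarith)] at hE
        linarith

/-- Periodic minimum problem in large domains: for `L ≥ max{τ,1−τ}` the least value of
`E^#_τ(v) = Fvol L v + φ_τ(v(0⁺), v(L⁻))` over `Adm(L,σ)` is
`min{2, 4√(σL), 4√((1−σ)L)}` (in particular, a τ-free quantity). -/
theorem periodic_min_large_domain (τ σ L : ℝ)
    (hτ : τ ∈ Set.Icc (0 : ℝ) 1) (hσ : σ ∈ Set.Ioo (0 : ℝ) 1)
    (hL : max τ (1 - τ) ≤ L) :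
    (∀ v : ℝ → ℝ, ∀ a b : ℝ, Adm L σ v →
        Tendsto v (nhdsWithin 0 (Set.Ioo 0 L)) (nhds a) →
        Tendsto v (nhdsWithin L (Set.Ioo 0 L)) (nhds b) →
        min (min 2 (4 * Real.sqrt (σ * L))) (4 * Real.sqrt ((1 - σ) * L)) ≤
          Fvol L v + phi τ a b) ∧
    (∃ v : ℝ → ℝ, ∃ a b : ℝ, Adm L σ v ∧
        Tendsto v (nhdsWithin 0 (Set.Ioo 0 L)) (nhds a) ∧
        Tendsto v (nhdsWithin L (Set.Ioo 0 L)) (nhds b) ∧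
        Fvol L v + phi τ a b =
          min (min 2 (4 * Real.sqrt (σ * L))) (4 * Real.sqrt ((1 - σ) * L))) := by
  have hmax := hL
  obtain ⟨hL1, hL2⟩ := max_le_iff.1 hL
  have hL0 : 1 / 2 ≤ L := by linarith
  have hLp : 0 < L := by linarith
  refine ⟨fun v a b hv ha hb => aux_lower hτ hσ hL v a b hv ha hb, ?_⟩
  have hσL : 0 < σ * L := mul_pos hσ.1 hLp
  have hσL' : 0 < (1 - σ) * L := mul_pos (by linarith [hσ.2]) hLp
  have key : ∃ v : ℝ → ℝ, ∃ a b : ℝ, Adm L σ v ∧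
        Tendsto v (nhdsWithin 0 (Set.Ioo 0 L)) (nhds a) ∧
        Tendsto v (nhdsWithin L (Set.Ioo 0 L)) (nhds b) ∧
        Fvol L v + phi τ a b ≤
          min (min 2 (4 * Real.sqrt (σ * L))) (4 * Real.sqrt ((1 - σ) * L)) := by
    have small : ∀ r, 0 < r → 4 * Real.sqrt r < 2 →
        0 < Real.sqrt r ∧ Real.sqrt r < L ∧ Real.sqrt r ≤ 1 := by
      intro r hr h
      exact ⟨Real.sqrt_pos.2 hr, by linarith, by linarith⟩
    by_cases h1 : 2 ≤ min (4 * Real.sqrt (σ * L)) (4 * Real.sqrt ((1 - σ) * L))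
    · obtain ⟨h2, h3⟩ := le_min_iff.1 h1
      obtain ⟨v, h4, h5, h6, -, h7⟩ := aux_bump (L := L) (σ := σ) (c0 := 0) (c1 := 1)
        (l := σ * L) (Or.inl rfl) (by norm_num) hσL (by nlinarith [hσ.2]) (by ring)
      refine ⟨v, 0, 0, h4, h5, h6, ?_⟩
      rw [aux_phi_zero, min_eq_left h2, min_eq_left h3]
      have := h7 (Or.inr rfl)
      norm_num at this
      linarith
    · rcases le_total (4 * Real.sqrt (σ * L)) (4 * Real.sqrt ((1 - σ) * L)) with h2 | h2
      · rw [min_eq_left h2, not_le] at h1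
        obtain ⟨s1, s2, s3⟩ := small _ hσL h1
        obtain ⟨v, h4, h5, h6, h7, -⟩ := aux_bump (L := L) (σ := σ) (c0 := 0)
          (c1 := Real.sqrt (σ * L)) (l := Real.sqrt (σ * L)) (Or.inl rfl) ⟨s1.le, s3⟩ s1 s2
          (by rw [sub_zero, Real.mul_self_sqrt hσL.le]; ring)
        refine ⟨v, 0, 0, h4, h5, h6, ?_⟩
        rw [aux_phi_zero, min_eq_right h1.le, min_eq_left h2]
        rw [sub_zero, abs_of_pos s1] at h7
        linarith
      · rw [min_eq_right h2, not_le] at h1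
        obtain ⟨s1, s2, s3⟩ := small _ hσL' h1
        obtain ⟨v, h4, h5, h6, h7, -⟩ := aux_bump (L := L) (σ := σ) (c0 := 1)
          (c1 := 1 - Real.sqrt ((1 - σ) * L)) (l := Real.sqrt ((1 - σ) * L)) (Or.inr rfl)
          ⟨by linarith, by linarith⟩ s1 s2
          (by
            have := Real.mul_self_sqrt hσL'.le
            linarith)
        refine ⟨v, 1, 1, h4, h5, h6, ?_⟩
        rw [aux_phi_one hτ, min_eq_right (le_min h1.le h2)]
        rw [abs_of_nonpos (by linarith)] at h7
        linarith
  obtain ⟨v, a, b, h1, h2, h3, h4⟩ := key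
  exact ⟨v, a, b, h1, h2, h3, le_antisymm h4 (aux_lower hτ hσ hL v a b h1 h2 h3)⟩
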